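/- Let A be an n×n matrix with nonnegative real entries whose tropical spectral radius λ = λ(A) is positive, and set B = (λ⁻¹A)*. Then the minimum over all positive vectors u ∈ ℝⁿ of the Hilbert seminorm K(B⊗u) equals δ = max_{i,j} B_{ij} (equivalently δ = 1ᵀ⊗B⊗1 for the all-ones vector 1), and the minimum is attained. -/

import Mathlib

/-- Max-times matrix product: `(A ⊗ B)_ik = max_j a_ij · b_jk`. -/
noncomputable def tMul {n : ℕ} (A B : Matrix (Fin n) (Fin n) ℝ) : Matrix (Fin n) (Fin n) ℝ :=
  fun i k => ⨆ j, A i j * B j k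

/-- Max-times matrix powers, with `A^⊗0 = I`. -/
noncomputable def tPow {n : ℕ} (A : Matrix (Fin n) (Fin n) ℝ) : ℕ → Matrix (Fin n) (Fin n) ℝ
  | 0 => fun i j => if i = j then 1 else 0
  | (k + 1) => tMul A (tPow A k)

/-- Tropical trace: `tr A = max_i a_ii`. -/
noncomputable def tTr {n : ℕ} (A : Matrix (Fin n) (Fin n) ℝ) : ℝ :=
  ⨆ i, A i i

/-- Tropical spectral radius: `λ(A) = max_{1 ≤ k ≤ n} (tr (A^⊗k))^(1/k)`. -/
noncomputable def tRadius {n : ℕ} (A : Matrix (Fin n) (Fin n) ℝ) : ℝ :=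
  ⨆ k : Fin n, (tTr (tPow A ((k : ℕ) + 1))) ^ ((1 : ℝ) / ((k : ℕ) + 1))

/-- Kleene star: `A* = I ⊕ A ⊕ A^⊗2 ⊕ ⋯ ⊕ A^⊗(n−1)` in the max-times algebra. -/
noncomputable def kStar {n : ℕ} (A : Matrix (Fin n) (Fin n) ℝ) : Matrix (Fin n) (Fin n) ℝ :=
  fun i j => ⨆ k : Fin n, tPow A (k : ℕ) i j

/-- Max-times matrix-vector product: `(B ⊗ u)_i = max_j b_ij · u_j`. -/
noncomputable def tMV {n : ℕ} (B : Matrix (Fin n) (Fin n) ℝ) (u : Fin n → ℝ) : Fin n → ℝ :=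
  fun i => ⨆ j, B i j * u j

/-- Hilbert seminorm of a positive vector: `K(x) = (max_i x_i) · (max_j 1/x_j)`. -/
noncomputable def hilbK {n : ℕ} (x : Fin n → ℝ) : ℝ :=
  (⨆ i, x i) * (⨆ j, (x j)⁻¹)

/-!
The image `x = B ⊗ u` of a positive vector under `B = (λ⁻¹A)*` satisfies `B ⊗ x ≤ x`, because `B` is
transitive: `b_ij b_jk ≤ b_ik`. Hence `b_ij ≤ x_i / x_j ≤ K(x)` for all `i, j`, and `K(x) ≥ δ`. For
`u = 1` the maximum of `x` is `δ` while `x ≥ 1`, so `K(x) ≤ δ`.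

Transitivity of the Kleene star rests on the normalization by `λ`: no cycle of `λ⁻¹A` of length at
most `n` has weight above `1`, and a walk with at least `n` edges contains such a cycle, so deleting
the cycle does not decrease the weight.
-/

section Powers

variable {n : ℕ} {A : Matrix (Fin n) (Fin n) ℝ}

theorem mul_le_tMul (A B : Matrix (Fin n) (Fin n) ℝ) (i j k : Fin n) :
    A i j * B j k ≤ tMul A B i k :=
  Finite.le_ciSup (fun j => A i j * B j k) j

theorem exists_tMul_eq_mul (A B : Matrix (Fin n) (Fin n) ℝ) (i k : Fin n) :
    ∃ j, tMul A B i k = A i j * B j k :=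
  have : Nonempty (Fin n) := ⟨i⟩
  (exists_eq_ciSup_of_finite (f := fun j => A i j * B j k)).imp fun _ h => h.symm

theorem tPow_zero_apply_self (A : Matrix (Fin n) (Fin n) ℝ) (i : Fin n) : tPow A 0 i i = 1 :=
  if_pos rfl

theorem tPow_zero_apply_ne (A : Matrix (Fin n) (Fin n) ℝ) {i j : Fin n} (h : i ≠ j) :
    tPow A 0 i j = 0 :=
  if_neg h

theorem tPow_nonneg (hA : ∀ i j, 0 ≤ A i j) (m : ℕ) (i j : Fin n) : 0 ≤ tPow A m i j := by
  induction m generalizing i with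
  | zero => simp only [tPow]; positivity
  | succ m ih => exact Real.iSup_nonneg fun k => mul_nonneg (hA i k) (ih k)

theorem tPow_mul_tPow_le (hA : ∀ i j, 0 ≤ A i j) (a b : ℕ) (i j k : Fin n) :
    tPow A a i j * tPow A b j k ≤ tPow A (a + b) i k := by
  induction a generalizing i with
  | zero =>
    rw [Nat.zero_add]
    obtain rfl | hij := eq_or_ne i j
    · rw [tPow_zero_apply_self, one_mul]
    · rw [tPow_zero_apply_ne A hij, zero_mul]
      exact tPow_nonneg hA b i k
  | succ a ih =>
    obtain ⟨l, hl⟩ := exists_tMul_eq_mul A (tPow A a) i j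
    rw [Nat.succ_add]
    calc tPow A (a + 1) i j * tPow A b j k
        = A i l * (tPow A a l j * tPow A b j k) := by rw [tPow, hl, mul_assoc]
      _ ≤ A i l * tPow A (a + b) l k := mul_le_mul_of_nonneg_left (ih l) (hA i l)
      _ ≤ tPow A (a + b + 1) i k := mul_le_tMul A _ i l k

theorem tPow_smul {c : ℝ} (hc : 0 ≤ c) (A : Matrix (Fin n) (Fin n) ℝ) (m : ℕ) :
    tPow (c • A) m = c ^ m • tPow A m := by
  induction m with
  | zero => rw [pow_zero, one_smul]; rfl
  | succ m ih =>
    ext i k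
    simp only [tPow, tMul, ih, Matrix.smul_apply, smul_eq_mul,
      Real.mul_iSup_of_nonneg (pow_nonneg hc (m + 1))]
    exact iSup_congr fun j => by ring

end Powers

section SpectralRadius

variable {n : ℕ} {A : Matrix (Fin n) (Fin n) ℝ}

theorem tTr_nonneg (hA : ∀ i j, 0 ≤ A i j) : 0 ≤ tTr A :=
  Real.iSup_nonneg fun i => hA i i

theorem tTr_smul {c : ℝ} (hc : 0 ≤ c) (A : Matrix (Fin n) (Fin n) ℝ) :
    tTr (c • A) = c * tTr A :=
  (Real.mul_iSup_of_nonneg hc _).symm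

theorem tRadius_nonneg (hA : ∀ i j, 0 ≤ A i j) : 0 ≤ tRadius A :=
  Real.iSup_nonneg fun _ => Real.rpow_nonneg (tTr_nonneg (tPow_nonneg hA _)) _

theorem tRadius_smul {c : ℝ} (hc : 0 ≤ c) (hA : ∀ i j, 0 ≤ A i j) :
    tRadius (c • A) = c * tRadius A := by
  unfold tRadius
  rw [Real.mul_iSup_of_nonneg hc]
  refine iSup_congr fun k => ?_
  have hroot : (c ^ ((k : ℕ) + 1)) ^ ((1 : ℝ) / ((k : ℕ) + 1)) = c := by
    simpa using Real.pow_rpow_inv_natCast hc (Nat.succ_ne_zero k)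
  rw [tPow_smul hc, tTr_smul (pow_nonneg hc _),
    Real.mul_rpow (pow_nonneg hc _) (tTr_nonneg (tPow_nonneg hA _)), hroot]

theorem tRadius_inv_tRadius_smul (hA : ∀ i j, 0 ≤ A i j) (hpos : 0 < tRadius A) :
    tRadius ((tRadius A)⁻¹ • A) = 1 := by
  rw [tRadius_smul (inv_nonneg.2 hpos.le) hA, inv_mul_cancel₀ hpos.ne']

theorem tPow_apply_self_le_tRadius_pow (hA : ∀ i j, 0 ≤ A i j) {k : ℕ} (hk : k ≤ n) (i : Fin n) :
    tPow A k i i ≤ tRadius A ^ k := by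
  obtain _ | k := k
  · rw [tPow_zero_apply_self, pow_zero]
  have htr : 0 ≤ tTr (tPow A (k + 1)) := tTr_nonneg (tPow_nonneg hA _)
  have hroot : tTr (tPow A (k + 1)) ^ ((1 : ℝ) / (k + 1)) ≤ tRadius A :=
    Finite.le_ciSup (fun l : Fin n => tTr (tPow A ((l : ℕ) + 1)) ^ ((1 : ℝ) / ((l : ℕ) + 1)))
      ⟨k, hk⟩
  calc tPow A (k + 1) i i
      ≤ tTr (tPow A (k + 1)) := Finite.le_ciSup (fun i => tPow A (k + 1) i i) i
    _ = (tTr (tPow A (k + 1)) ^ ((1 : ℝ) / (k + 1))) ^ (k + 1) := by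
        simpa using (Real.rpow_inv_natCast_pow htr k.succ_ne_zero).symm
    _ ≤ tRadius A ^ (k + 1) := pow_le_pow_left₀ (Real.rpow_nonneg htr _) hroot _

theorem tPow_apply_self_le_one (hA : ∀ i j, 0 ≤ A i j) (hr : tRadius A ≤ 1) {k : ℕ} (hk : k ≤ n)
    (i : Fin n) : tPow A k i i ≤ 1 :=
  (tPow_apply_self_le_tRadius_pow hA hk i).trans (pow_le_one₀ (tRadius_nonneg hA) hr)

end SpectralRadius

section Walks

variable {n : ℕ} {A : Matrix (Fin n) (Fin n) ℝ}

/-- The weight of the part of the walk `w` between times `p` and `q`, in the weighted digraph of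
`A`. Walks are infinite sequences, so that subwalks need no reindexing. -/
def walkWeight (A : Matrix (Fin n) (Fin n) ℝ) (w : ℕ → Fin n) (p q : ℕ) : ℝ :=
  ∏ k ∈ Finset.Ico p q, A (w k) (w (k + 1))

theorem walkWeight_nonneg (hA : ∀ i j, 0 ≤ A i j) (w : ℕ → Fin n) (p q : ℕ) :
    0 ≤ walkWeight A w p q :=
  Finset.prod_nonneg fun _ _ => hA _ _

theorem walkWeight_mul_walkWeight (A : Matrix (Fin n) (Fin n) ℝ) (w : ℕ → Fin n) {p q r : ℕ}
    (hpq : p ≤ q) (hqr : q ≤ r) :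
    walkWeight A w p q * walkWeight A w q r = walkWeight A w p r :=
  Finset.prod_Ico_consecutive _ hpq hqr

theorem walkWeight_le_tPow (hA : ∀ i j, 0 ≤ A i j) (w : ℕ → Fin n) {p q : ℕ} (hpq : p ≤ q) :
    walkWeight A w p q ≤ tPow A (q - p) (w p) (w q) := by
  induction hpq using Nat.decreasingInduction with
  | self => rw [walkWeight, Finset.Ico_self, Finset.prod_empty, Nat.sub_self, tPow_zero_apply_self]
  | of_succ p hp ih =>
    rw [show q - p = q - (p + 1) + 1 by lia]
    calc walkWeight A w p q
        = A (w p) (w (p + 1)) * walkWeight A w (p + 1) q := Finset.prod_eq_prod_Ico_succ_bot hp _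
      _ ≤ A (w p) (w (p + 1)) * tPow A (q - (p + 1)) (w (p + 1)) (w q) :=
        mul_le_mul_of_nonneg_left ih (hA _ _)
      _ ≤ tPow A (q - (p + 1) + 1) (w p) (w q) := mul_le_tMul A _ _ _ _

theorem exists_walkWeight_eq_tPow {m : ℕ} {i j : Fin n} (h : tPow A m i j ≠ 0) :
    ∃ w : ℕ → Fin n, w 0 = i ∧ w m = j ∧ walkWeight A w 0 m = tPow A m i j := by
  induction m generalizing i with
  | zero =>
    obtain rfl : i = j := of_not_not fun hij => h (tPow_zero_apply_ne A hij)
    exact ⟨fun _ => i, rfl, rfl, (tPow_zero_apply_self A i).symm⟩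
  | succ m ih =>
    obtain ⟨l, hl⟩ := exists_tMul_eq_mul A (tPow A m) i j
    rw [tPow, hl] at h ⊢
    obtain ⟨w, rfl, hwm, hw⟩ := ih (right_ne_zero_of_mul h)
    refine ⟨fun | 0 => i | k + 1 => w k, rfl, hwm, ?_⟩
    rw [← hw, walkWeight, walkWeight, ← Finset.range_eq_Ico, ← Finset.range_eq_Ico,
      Finset.prod_range_succ', mul_comm]

theorem exists_lt_apply_eq (w : ℕ → Fin n) : ∃ p q : ℕ, p < q ∧ q ≤ n ∧ w p = w q := by
  obtain ⟨p, q, hpq, hw⟩ :=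
    Fintype.exists_ne_map_eq_of_card_lt (fun k : Fin (n + 1) => w k) (by simp)
  obtain h | h := lt_or_gt_of_ne hpq
  · exact ⟨p, q, h, q.is_le, hw⟩
  · exact ⟨q, p, h, p.is_le, hw.symm⟩

theorem exists_lt_tPow_le_tPow (hA : ∀ i j, 0 ≤ A i j) (hr : tRadius A ≤ 1) {m : ℕ} (hm : n ≤ m)
    (i j : Fin n) : ∃ m' < m, tPow A m i j ≤ tPow A m' i j := by
  obtain h0 | h0 := eq_or_ne (tPow A m i j) 0
  · exact ⟨0, i.pos.trans_le hm, h0.trans_le (tPow_nonneg hA 0 i j)⟩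
  obtain ⟨w, rfl, rfl, hw⟩ := exists_walkWeight_eq_tPow h0
  obtain ⟨p, q, hpq, hqn, hwpq⟩ := exists_lt_apply_eq w
  have hqm : q ≤ m := hqn.trans hm
  have hcycle : walkWeight A w p q ≤ 1 := by
    have := walkWeight_le_tPow hA w hpq.le
    rw [← hwpq] at this
    exact this.trans (tPow_apply_self_le_one hA hr (by lia) (w p))
  refine ⟨p + (m - q), by lia, ?_⟩
  calc tPow A m (w 0) (w m)
      = walkWeight A w 0 p * walkWeight A w p q * walkWeight A w q m := by
        rw [walkWeight_mul_walkWeight A w p.zero_le hpq.le,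
          walkWeight_mul_walkWeight A w q.zero_le hqm, hw]
    _ ≤ walkWeight A w 0 p * walkWeight A w q m :=
        mul_le_mul_of_nonneg_right
          (mul_le_of_le_one_right (walkWeight_nonneg hA w 0 p) hcycle)
          (walkWeight_nonneg hA w q m)
    _ ≤ tPow A p (w 0) (w p) * tPow A (m - q) (w p) (w m) :=
        mul_le_mul (walkWeight_le_tPow hA w p.zero_le)
          (hwpq ▸ walkWeight_le_tPow hA w hqm)
          (walkWeight_nonneg hA w q m) (tPow_nonneg hA p _ _)
    _ ≤ tPow A (p + (m - q)) (w 0) (w m) := tPow_mul_tPow_le hA p (m - q) _ _ _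

end Walks

section KleeneStar

variable {n : ℕ} {A : Matrix (Fin n) (Fin n) ℝ}

theorem tPow_le_kStar_of_lt (A : Matrix (Fin n) (Fin n) ℝ) {m : ℕ} (hm : m < n) (i j : Fin n) :
    tPow A m i j ≤ kStar A i j :=
  Finite.le_ciSup (fun k : Fin n => tPow A k i j) ⟨m, hm⟩

theorem exists_kStar_eq_tPow (A : Matrix (Fin n) (Fin n) ℝ) (i j : Fin n) :
    ∃ m : ℕ, kStar A i j = tPow A m i j :=
  have : Nonempty (Fin n) := ⟨i⟩
  let ⟨k, hk⟩ := exists_eq_ciSup_of_finite (f := fun k : Fin n => tPow A k i j)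
  ⟨k, hk.symm⟩

theorem kStar_nonneg (hA : ∀ i j, 0 ≤ A i j) (i j : Fin n) : 0 ≤ kStar A i j :=
  Real.iSup_nonneg fun _ => tPow_nonneg hA _ i j

theorem one_le_kStar_apply_self (A : Matrix (Fin n) (Fin n) ℝ) (i : Fin n) : 1 ≤ kStar A i i :=
  (tPow_zero_apply_self A i).ge.trans (tPow_le_kStar_of_lt A i.pos i i)

theorem tPow_le_kStar (hA : ∀ i j, 0 ≤ A i j) (hr : tRadius A ≤ 1) (m : ℕ) (i j : Fin n) :
    tPow A m i j ≤ kStar A i j := by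
  induction m using Nat.strong_induction_on with
  | h m ih =>
    obtain hm | hm := lt_or_ge m n
    · exact tPow_le_kStar_of_lt A hm i j
    · obtain ⟨m', hm', hle⟩ := exists_lt_tPow_le_tPow hA hr hm i j
      exact hle.trans (ih m' hm')

theorem kStar_mul_kStar_le (hA : ∀ i j, 0 ≤ A i j) (hr : tRadius A ≤ 1) (i j k : Fin n) :
    kStar A i j * kStar A j k ≤ kStar A i k := by
  obtain ⟨a, ha⟩ := exists_kStar_eq_tPow A i j
  obtain ⟨b, hb⟩ := exists_kStar_eq_tPow A j k
  rw [ha, hb]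
  exact (tPow_mul_tPow_le hA a b i j k).trans (tPow_le_kStar hA hr (a + b) i k)

end KleeneStar

section HilbertSeminorm

variable {n : ℕ} {B : Matrix (Fin n) (Fin n) ℝ} {u x : Fin n → ℝ}

theorem div_le_hilbK (hx : ∀ i, 0 < x i) (i j : Fin n) : x i / x j ≤ hilbK x := by
  rw [div_eq_mul_inv]
  exact mul_le_mul (Finite.le_ciSup x i) (Finite.le_ciSup (fun j => (x j)⁻¹) j)
    (inv_nonneg.2 (hx j).le) (Real.iSup_nonneg fun i => (hx i).le)

theorem hilbK_le_iSup_of_one_le (hx : ∀ i, 1 ≤ x i) : hilbK x ≤ ⨆ i, x i :=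
  mul_le_of_le_one_right (Real.iSup_nonneg fun i => zero_le_one.trans (hx i))
    (Real.iSup_le (fun j => inv_le_one_of_one_le₀ (hx j)) zero_le_one)

theorem tMV_one (B : Matrix (Fin n) (Fin n) ℝ) : tMV B 1 = fun i => ⨆ j, B i j := by
  funext i
  simp only [tMV, Pi.one_apply, mul_one]

theorem le_tMV_apply {i : Fin n} (hB : 1 ≤ B i i) (hu : 0 ≤ u i) : u i ≤ tMV B u i :=
  (le_mul_of_one_le_left hu hB).trans (Finite.le_ciSup (fun j => B i j * u j) i)

theorem mul_tMV_le_tMV (hB : ∀ i j, 0 ≤ B i j) (htrans : ∀ i j k, B i j * B j k ≤ B i k)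
    (hu : ∀ i, 0 ≤ u i) (i j : Fin n) : B i j * tMV B u j ≤ tMV B u i := by
  unfold tMV
  rw [Real.mul_iSup_of_nonneg (hB i j)]
  have : Nonempty (Fin n) := ⟨i⟩
  refine ciSup_mono (Finite.bddAbove_range _) fun k => ?_
  rw [← mul_assoc]
  exact mul_le_mul_of_nonneg_right (htrans i j k) (hu k)

theorem apply_le_hilbK_tMV (hB : ∀ i j, 0 ≤ B i j) (hrefl : ∀ i, 1 ≤ B i i)
    (htrans : ∀ i j k, B i j * B j k ≤ B i k) (hu : ∀ i, 0 < u i) (i j : Fin n) :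
    B i j ≤ hilbK (tMV B u) := by
  have hpos (k : Fin n) : 0 < tMV B u k := (hu k).trans_le (le_tMV_apply (hrefl k) (hu k).le)
  calc B i j ≤ tMV B u i / tMV B u j :=
        (le_div_iff₀ (hpos j)).2 (mul_tMV_le_tMV hB htrans (fun k => (hu k).le) i j)
    _ ≤ hilbK (tMV B u) := div_le_hilbK hpos i j

theorem hilbK_tMV_one_le (hrefl : ∀ i, 1 ≤ B i i) : hilbK (tMV B 1) ≤ ⨆ i, ⨆ j, B i j := by
  have h := hilbK_le_iSup_of_one_le fun i => le_tMV_apply (u := 1) (hrefl i) zero_le_one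
  rwa [tMV_one] at h ⊢

theorem isLeast_hilbK_tMV [NeZero n] (hB : ∀ i j, 0 ≤ B i j) (hrefl : ∀ i, 1 ≤ B i i)
    (htrans : ∀ i j k, B i j * B j k ≤ B i k) :
    IsLeast {v : ℝ | ∃ u : Fin n → ℝ, (∀ i, 0 < u i) ∧ v = hilbK (tMV B u)} (⨆ i, ⨆ j, B i j) := by
  have lower (u : Fin n → ℝ) (hu : ∀ i, 0 < u i) : ⨆ i, ⨆ j, B i j ≤ hilbK (tMV B u) :=
    ciSup_le fun i => ciSup_le fun j => apply_le_hilbK_tMV hB hrefl htrans hu i j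
  refine ⟨⟨1, fun _ => one_pos, ?_⟩, ?_⟩
  · exact (lower 1 fun _ => one_pos).antisymm (hilbK_tMV_one_le hrefl)
  · rintro _ ⟨u, hu, rfl⟩
    exact lower u hu

end HilbertSeminorm

theorem min_hilbert_seminorm_over_kleene_image_general {n : ℕ} [NeZero n]
    {A : Matrix (Fin n) (Fin n) ℝ} (hA : ∀ i j, 0 ≤ A i j) (hr : tRadius A ≤ 1) :
    IsLeast {v : ℝ | ∃ u : Fin n → ℝ, (∀ i, 0 < u i) ∧ v = hilbK (tMV (kStar A) u)}
      (⨆ i, ⨆ j, kStar A i j) :=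
  isLeast_hilbK_tMV (kStar_nonneg hA) (one_le_kStar_apply_self A) (kStar_mul_kStar_le hA hr)

/-- For a nonnegative matrix `A` with positive tropical spectral radius
`λ = λ(A)` and `B = (λ⁻¹ A)*`, the minimum over positive vectors `u` of the
Hilbert seminorm `K(B ⊗ u)` equals `δ = max_{i,j} B_ij`, and it is attained. -/
theorem min_hilbert_seminorm_over_kleene_image (n : ℕ) (hn : 1 ≤ n)
    (A : Matrix (Fin n) (Fin n) ℝ) (hA : ∀ i j, 0 ≤ A i j)
    (hpos : 0 < tRadius A)
    (B : Matrix (Fin n) (Fin n) ℝ)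
    (hB : B = kStar (fun i j => (tRadius A)⁻¹ * A i j))
    (δ : ℝ) (hδ : δ = ⨆ i, ⨆ j, B i j) :
    IsLeast {v : ℝ | ∃ u : Fin n → ℝ, (∀ i, 0 < u i) ∧ v = hilbK (tMV B u)} δ := by
  subst hB hδ
  have : NeZero n := ⟨Nat.one_le_iff_ne_zero.1 hn⟩
  exact min_hilbert_seminorm_over_kleene_image_general
    (fun i j => mul_nonneg (inv_nonneg.2 hpos.le) (hA i j)) (tRadius_inv_tRadius_smul hA hpos).le
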